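/- Suppose u : (0,b) → E is differentiable on (0,b) and the function v(x) = x^α u'(x) (the degenerate first derivative u^[1]) is itself differentiable on (0,b). Then ũ = u∘ψ is twice differentiable on (0,b̃), and for every τ ∈ (0,b̃) one has ũ''(τ) = ψ(τ)^α · v'(ψ(τ)), i.e. the second-order degenerate derivative u^[2](x) = (x^α d/dx)² u(x) is transformed by the substitution into the ordinary second derivative d²ũ/dτ². -/

import Mathlib

/-! By the chain rule, `(f ∘ ψ)'(τ) = ψ'(τ) • f'(ψ(τ))`, and `ψ' = ψ ^ α`. Since `ψ` maps
`(0, b̃)` into `(0, b)`, applying this to `f = u` and then to `f = v = x ^ α • u'` gives both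
derivatives. -/

open MeasureTheory Set

/-- The inverse substitution `ψ(τ) = ((1-α)τ)^(1/(1-α))`. -/
noncomputable def psi (α : ℝ) (τ : ℝ) : ℝ := ((1 - α) * τ) ^ (1 / (1 - α))

/-- The transformed endpoint `b̃ = b^(1-α)/(1-α)`. -/
noncomputable def btil (α b : ℝ) : ℝ := b ^ (1 - α) / (1 - α)

theorem hasDerivAt_psi {α τ : ℝ} (hα : α < 1) (hτ : 0 < τ) :
    HasDerivAt (psi α) (psi α τ ^ α) τ := by
  have h1 : 0 < 1 - α := sub_pos.2 hα
  have hp : 0 < (1 - α) * τ := mul_pos h1 hτ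
  have h := ((hasDerivAt_id τ).const_mul (1 - α)).rpow_const (p := 1 / (1 - α))
    (Or.inl hp.ne')
  refine h.congr_deriv ?_
  -- the exponents agree: `1 / (1 - α) - 1 = α / (1 - α)`
  have he : 1 / (1 - α) - 1 = 1 / (1 - α) * α := by
    field_simp
    ring
  simp only [psi, id]
  rw [he, Real.rpow_mul hp.le]
  field_simp

theorem psi_mem_Ioo {α b τ : ℝ} (hα : α < 1) (hb : 0 < b) (hτ : τ ∈ Ioo 0 (btil α b)) :
    psi α τ ∈ Ioo 0 b := by
  have h1 : 0 < 1 - α := sub_pos.2 hα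
  have hp : 0 < (1 - α) * τ := mul_pos h1 hτ.1
  refine ⟨Real.rpow_pos_of_pos hp _, ?_⟩
  have hlt : (1 - α) * τ < b ^ (1 - α) := by
    have := (lt_div_iff₀ h1).1 hτ.2
    linarith
  calc psi α τ < (b ^ (1 - α)) ^ (1 / (1 - α)) :=
        Real.rpow_lt_rpow hp.le hlt (by positivity)
    _ = b := by rw [one_div, Real.rpow_rpow_inv hb.le h1.ne']

/-- Suppose `u : (0,b) → E` is differentiable on `(0,b)` (with
derivative `u'`) and the degenerate first derivative `v(x) = x^α • u'(x)` is itself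
differentiable on `(0,b)` (with derivative `v'`).  Then `ũ = u ∘ ψ` is twice
differentiable on `(0, b̃)`: its first derivative is `τ ↦ ψ(τ)^α • u'(ψ(τ))` (i.e.
`v ∘ ψ`), and for every `τ ∈ (0, b̃)` one has `ũ''(τ) = ψ(τ)^α • v'(ψ(τ))`; that is,
the second-order degenerate derivative `u^[2] = (x^α d/dx)² u` is transformed into the
ordinary second derivative `d²ũ/dτ²`. -/
theorem hasDerivAt_second_comp_psi
    {E : Type*} [NormedAddCommGroup E] [NormedSpace ℝ E]
    (α b : ℝ) (hα0 : 0 ≤ α) (hα1 : α < 1) (hb : 0 < b)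
    (u : ℝ → E) (u' v' : ℝ → E)
    (hu : ∀ x ∈ Ioo 0 b, HasDerivAt u (u' x) x)
    (hv : ∀ x ∈ Ioo 0 b, HasDerivAt (fun y => y ^ α • u' y) (v' x) x) :
    ∀ τ ∈ Ioo 0 (btil α b),
      HasDerivAt (fun t => u (psi α t)) ((psi α τ) ^ α • u' (psi α τ)) τ ∧
      HasDerivAt (fun t => (psi α t) ^ α • u' (psi α t))
        ((psi α τ) ^ α • v' (psi α τ)) τ := by
  intro τ hτ
  have hψ := hasDerivAt_psi hα1 hτ.1
  have hm := psi_mem_Ioo hα1 hb hτ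
  exact ⟨(hu _ hm).scomp τ hψ, (hv _ hm).scomp τ hψ⟩
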